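/- arXiv:2205.01487 — 5 statements merged into one kernel-verified Lean document; each statement's English description precedes it below -/
import Mathlib

section
/- Suppose φ : ℝ → ℝ is bounded, φ' is absolutely continuous with φ'' = Vφ almost everywhere, and φ(x) → 1 as x → +∞. Then the limit a := lim_{x→−∞} φ(x) exists, a ∈ {1,−1}, and φ(−x) = a·φ(x) for all x ∈ ℝ; in particular φ is even if a = 1 and odd if a = −1. -/
open MeasureTheory Filter Topology Set

noncomputable def jap (x : ℝ) : ℝ := Real.sqrt (1 + x ^ 2)

/-- A bounded solution of the integrated zero-energy equation. -/
structure Sol (V f g : ℝ → ℝ) : Prop where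
  bd : ∃ B : ℝ, ∀ x, |f x| ≤ B
  der : ∀ x, HasDerivAt f (g x) x
  ode : ∀ x, g x = g 0 + ∫ t in (0:ℝ)..x, V t * f t

lemma Sol.cont {V f g : ℝ → ℝ} (h : Sol V f g) : Continuous f :=
  continuous_iff_continuousAt.2 fun x => (h.der x).continuousAt

lemma Sol.integrable {V f g : ℝ → ℝ} (hV : Integrable V) (h : Sol V f g) :
    Integrable (fun t => V t * f t) := by
  obtain ⟨B, hB⟩ := h.bd
  exact hV.mul_bdd (c := B) h.cont.aestronglyMeasurable
    (Eventually.of_forall fun x => by simpa using hB x)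

lemma Sol.contd {V f g : ℝ → ℝ} (hV : Integrable V) (h : Sol V f g) : Continuous g := by
  have : g = fun x => g 0 + ∫ t in (0:ℝ)..x, V t * f t := funext h.ode
  rw [this]
  exact continuous_const.add (intervalIntegral.continuous_primitive
    (fun a b => (h.integrable hV).intervalIntegrable) 0)

lemma Sol.tendsto {V f g : ℝ → ℝ} (hV : Integrable V) (h : Sol V f g) :
    Tendsto g atTop (𝓝 0) := by
  have h1 : Tendsto g atTop (𝓝 (g 0 + ∫ t in Ioi (0:ℝ), V t * f t)) := by
    have := (intervalIntegral_tendsto_integral_Ioi (0:ℝ) (h.integrable hV).integrableOn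
      tendsto_id).const_add (g 0)
    exact this.congr fun x => (h.ode x).symm
  set c := g 0 + ∫ t in Ioi (0:ℝ), V t * f t with hc
  suffices c = 0 by rwa [this] at h1
  by_contra hne
  have hpos : 0 < |c| := abs_pos.2 hne
  have h2 : ∀ᶠ x in atTop, |c| / 2 < |g x| :=
    h1.abs.eventually (lt_mem_nhds (by linarith))
  obtain ⟨X, hX⟩ := eventually_atTop.1 h2
  obtain ⟨B, hB⟩ := h.bd
  have hB0 : 0 ≤ B := (abs_nonneg _).trans (hB 0)
  let x := max X 0 + 1
  let y := x + 4 * B / |c| + 1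
  have hxy : x < y := by
    have : 0 ≤ 4 * B / |c| := by positivity
    simp only [y]; linarith
  obtain ⟨ξ, hξ, he⟩ := exists_hasDerivAt_eq_slope f g hxy h.cont.continuousOn
    (fun z _ => h.der z)
  have hξX : X ≤ ξ := by
    have := le_max_left X 0
    have := hξ.1
    simp only [x] at this; linarith
  have h3 := hX ξ hξX
  have h4 : g ξ * (y - x) = f y - f x := by
    rw [he]; field_simp [(sub_pos.2 hxy).ne']
  have h5 : |g ξ| * (y - x) ≤ 2 * B := by
    rw [← abs_of_pos (sub_pos.2 hxy), ← abs_mul, h4]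
    have := abs_sub (f y) (f x)
    have := hB y
    have := hB x
    linarith
  have h6 : |c| / 2 * (y - x) = 2 * B + |c| / 2 := by
    simp only [y]; field_simp; ring
  have h7 := mul_lt_mul_of_pos_right h3 (sub_pos.2 hxy)
  linarith

lemma Sol.ac {V f g : ℝ → ℝ} (hV : Integrable V) (h : Sol V f g) (b : ℝ) :
    AbsolutelyContinuousOnInterval f 0 b := by
  apply ContDiffOn.absolutelyContinuousOnInterval
  apply ContDiff.contDiffOn
  rw [contDiff_one_iff_deriv]
  refine ⟨fun x => (h.der x).differentiableAt, ?_⟩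
  have : deriv f = g := funext fun x => (h.der x).deriv
  rw [this]; exact h.contd hV

lemma Sol.acd {V f g : ℝ → ℝ} (hV : Integrable V) (h : Sol V f g) (b : ℝ) :
    AbsolutelyContinuousOnInterval g 0 b := by
  have h1 : AbsolutelyContinuousOnInterval (fun _ : ℝ => g 0) 0 b :=
    ContDiffOn.absolutelyContinuousOnInterval contDiffOn_const
  have h2 := (h.integrable hV).intervalIntegrable (a := 0) (b := b)
    |>.absolutelyContinuousOnInterval_intervalIntegral (c := 0) (by simp)
  have h3 := h1.add h2
  have : g = (fun _ : ℝ => g 0) + fun x => ∫ t in (0:ℝ)..x, V t * f t := funext h.ode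
  rw [this]; exact h3

lemma Sol.aeder {V f g : ℝ → ℝ} (hV : Integrable V) (h : Sol V f g) :
    ∀ᵐ x, HasDerivAt g (V x * f x) x := by
  filter_upwards [LocallyIntegrable.ae_hasDerivAt_integral (h.integrable hV).locallyIntegrable]
    with x hx
  have : g = fun x => g 0 + ∫ t in (0:ℝ)..x, V t * f t := funext h.ode
  rw [this]
  exact (hx 0).const_add _

lemma Sol.wronskian {V f g u v : ℝ → ℝ} (hV : Integrable V) (h : Sol V f g) (k : Sol V u v) :
    f 0 * v 0 - g 0 * u 0 = 0 := by
  have hc : ∀ b, f b * v b - g b * u b = f 0 * v 0 - g 0 * u 0 := by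
    intro b
    have hac : AbsolutelyContinuousOnInterval (f * v - g * u) 0 b :=
      ((h.ac hV b).mul (k.acd hV b)).sub ((h.acd hV b).mul (k.ac hV b))
    obtain ⟨C, hC⟩ := hac.const_of_ae_hasDerivAt_zero (by
      filter_upwards [h.aeder hV, k.aeder hV] with x h1 k1 _
      have := ((h.der x).mul k1).sub (h1.mul (k.der x))
      convert this using 1
      ring)
    have e1 := hC b (by simp)
    have e2 := hC 0 (by simp)
    simp only [Pi.sub_apply, Pi.mul_apply] at e1 e2
    rw [e1, e2]
  have ht : Tendsto (fun b => f b * v b - g b * u b) atTop (𝓝 (0 - 0)) := by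
    obtain ⟨B, hB⟩ := h.bd
    obtain ⟨D, hD⟩ := k.bd
    refine Tendsto.sub ?_ ?_
    · refine squeeze_zero_norm (a := fun x => B * |v x|) (fun x => ?_) ?_
      · rw [norm_mul]
        exact mul_le_mul_of_nonneg_right (hB x) (abs_nonneg _)
      · simpa using ((k.tendsto hV).abs).const_mul B
    · refine squeeze_zero_norm (a := fun x => |g x| * D) (fun x => ?_) ?_
      · rw [norm_mul]
        exact mul_le_mul_of_nonneg_left (hD x) (abs_nonneg _)
      · simpa using ((h.tendsto hV).abs).mul_const D
  have ht2 := ht.congr hc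
  have := tendsto_nhds_unique tendsto_const_nhds ht2
  simpa using this

lemma Sol.zero {V f g : ℝ → ℝ} (hV : Integrable V) (h : Sol V f g) (h0 : f 0 = 0)
    (g0 : g 0 = 0) : ∀ x, 0 ≤ x → f x = 0 := by
  obtain ⟨B, hB⟩ := h.bd
  have hB0 : 0 ≤ B := (abs_nonneg _).trans (hB 0)
  set K := ∫ t, |V t| with hK
  have hK0 : 0 ≤ K := integral_nonneg fun t => abs_nonneg _
  set l := 2 * K + 1 with hl
  have hl0 : 0 < l := by linarith
  have key : ∀ n : ℕ, ∀ x, 0 ≤ x → |f x| ≤ B * (1/2)^n * Real.exp (l * x) := by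
    intro n
    induction n with
    | zero =>
      intro x hx
      have : 1 ≤ Real.exp (l * x) := Real.one_le_exp (by positivity)
      have := hB x
      simp only [pow_zero, mul_one]
      nlinarith
    | succ n ih =>
      set C := B * (1/2)^n with hC
      have hC0 : 0 ≤ C := by positivity
      have hg : ∀ x, 0 ≤ x → |g x| ≤ C * K * Real.exp (l * x) := by
        intro x hx
        rw [h.ode x, g0, zero_add]
        have h1 := intervalIntegral.norm_integral_le_of_norm_le (μ := volume)
          (f := fun t => V t * f t)
          (g := fun t => |V t| * (C * Real.exp (l * x))) hx
          (Eventually.of_forall fun t ht => by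
            rw [norm_mul]
            refine mul_le_mul_of_nonneg_left ?_ (abs_nonneg _)
            refine (ih t ht.1.le).trans ?_
            have := ht.2
            gcongr) (hV.abs.mul_const _).intervalIntegrable
        refine h1.trans ?_
        rw [intervalIntegral.integral_mul_const, intervalIntegral.integral_of_le hx]
        have h2 : ∫ t in Ioc 0 x, |V t| ≤ K :=
          setIntegral_le_integral hV.abs (Eventually.of_forall fun t => abs_nonneg _)
        calc _ ≤ K * (C * Real.exp (l * x)) := by gcongr
          _ = _ := by ring
      intro x hx
      have h1 : f x = ∫ t in (0:ℝ)..x, g t := by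
        rw [intervalIntegral.integral_eq_sub_of_hasDerivAt (fun t _ => h.der t)
          ((h.contd hV).intervalIntegrable _ _), h0, sub_zero]
      have h2 : ‖∫ t in (0:ℝ)..x, g t‖ ≤ ∫ t in (0:ℝ)..x, C * K * Real.exp (l * t) :=
        intervalIntegral.norm_integral_le_of_norm_le hx
          (Eventually.of_forall fun t ht => hg t ht.1.le)
          (Continuous.intervalIntegrable (by fun_prop) _ _)
      have h3 : ∫ t in (0:ℝ)..x, C * K * Real.exp (l * t)
          = C * K / l * Real.exp (l * x) - C * K / l * Real.exp (l * 0) := by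
        apply intervalIntegral.integral_eq_sub_of_hasDerivAt
          (f := fun t => C * K / l * Real.exp (l * t))
        · intro t _
          have := (((hasDerivAt_id t).const_mul l).exp).const_mul (C * K / l)
          refine this.congr_deriv ?_
          simp only [id]; field_simp
        · exact Continuous.intervalIntegrable (by fun_prop) _ _
      rw [h1]
      refine h2.trans ?_
      rw [h3]
      have h4 : C * K / l ≤ C * (1/2) := by
        rw [div_le_iff₀ hl0]
        nlinarith
      have h5 : 0 ≤ C * K / l * Real.exp (l * 0) := by positivity
      have h6 : C * K / l * Real.exp (l * x) ≤ C * (1/2) * Real.exp (l * x) := by gcongr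
      calc _ ≤ C * (1/2) * Real.exp (l * x) := by linarith
        _ = _ := by rw [hC]; ring
  intro x hx
  have ht : Tendsto (fun n : ℕ => B * (1/2:ℝ)^n * Real.exp (l * x)) atTop (𝓝 0) := by
    have := ((tendsto_pow_atTop_nhds_zero_of_lt_one (r := (1/2:ℝ)) (by norm_num)
      (by norm_num)).const_mul B).mul_const (Real.exp (l * x))
    simpa using this
  have := ge_of_tendsto' ht fun n => key n x hx
  exact abs_eq_zero.1 (le_antisymm this (abs_nonneg _))

lemma Sol.reflect {V f g : ℝ → ℝ} (he : ∀ᵐ x ∂(volume : Measure ℝ), V (-x) = V x)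
    (h : Sol V f g) : Sol V (fun x => f (-x)) (fun x => - g (-x)) where
  bd := by
    obtain ⟨B, hB⟩ := h.bd
    exact ⟨B, fun x => hB (-x)⟩
  der := fun x => by
    have := (h.der (-x)).scomp x (hasDerivAt_neg x)
    simpa [Function.comp_def] using this
  ode := fun x => by
    have h1 : ∫ t in (0:ℝ)..x, V t * f (-t) = ∫ t in (0:ℝ)..x, V (-t) * f (-t) := by
      apply intervalIntegral.integral_congr_ae
      filter_upwards [he] with t ht _
      rw [ht]
    rw [h1, intervalIntegral.integral_comp_neg (fun t => V t * f t), h.ode (-x),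
      intervalIntegral.integral_symm]
    simp [add_comm]

lemma Sol.add_mul {V f g u v : ℝ → ℝ} (hV : Integrable V) (h : Sol V f g) (k : Sol V u v)
    (c : ℝ) : Sol V (fun x => f x + c * u x) (fun x => g x + c * v x) where
  bd := by
    obtain ⟨B, hB⟩ := h.bd
    obtain ⟨D, hD⟩ := k.bd
    refine ⟨B + |c| * D, fun x => (abs_add_le _ _).trans ?_⟩
    rw [abs_mul]
    exact add_le_add (hB x) (mul_le_mul_of_nonneg_left (hD x) (abs_nonneg _))
  der := fun x => (h.der x).add ((k.der x).const_mul c)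
  ode := fun x => by
    have h1 : ∫ t in (0:ℝ)..x, V t * (f t + c * u t)
        = (∫ t in (0:ℝ)..x, V t * f t) + c * ∫ t in (0:ℝ)..x, V t * u t := by
      rw [← intervalIntegral.integral_const_mul, ← intervalIntegral.integral_add
        (h.integrable hV).intervalIntegrable ((k.integrable hV).const_mul c).intervalIntegrable]
      congr 1; ext t; ring
    rw [h1, h.ode x, k.ode x]
    ring

/-- If `V` is even (a.e.), `φ` is a bounded zero-energy solution (`φ'` absolutely continuous with
`φ'' = Vφ` a.e., encoded by the integral identity for the everywhere-derivative `φd`), and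
`φ(x) → 1` as `x → +∞`, then `φ(x) → a` as `x → −∞` with `a ∈ {1,−1}` and `φ(−x) = a φ(x)`. -/
theorem statement_3 (V : ℝ → ℝ) (hVmeas : Measurable V)
    (hVint : Integrable (fun y : ℝ => jap y * |V y|))
    (hVeven : ∀ᵐ x ∂(volume : Measure ℝ), V (-x) = V x)
    (φ φd : ℝ → ℝ)
    (hbd : ∃ B : ℝ, ∀ x, |φ x| ≤ B)
    (hderiv : ∀ x, HasDerivAt φ (φd x) x)
    (hode : ∀ x, φd x = φd 0 + ∫ t in (0:ℝ)..x, V t * φ t)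
    (hlim : Tendsto φ atTop (𝓝 1)) :
    ∃ a : ℝ, Tendsto φ atBot (𝓝 a) ∧ (a = 1 ∨ a = -1) ∧ ∀ x, φ (-x) = a * φ x := by
  have hV : Integrable V := by
    refine hVint.mono' hVmeas.aestronglyMeasurable (Eventually.of_forall fun x => ?_)
    have : 1 ≤ jap x := by
      unfold jap
      rw [Real.one_le_sqrt]
      nlinarith [sq_nonneg x]
    exact le_mul_of_one_le_left (abs_nonneg _) this
  have h : Sol V φ φd := ⟨hbd, hderiv, hode⟩
  have k := h.reflect hVeven
  have W := h.wronskian hV k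
  simp only [neg_zero] at W
  have W2 : φd 0 = 0 ∨ φ 0 = 0 := mul_eq_zero.1 (by linarith)
  have main : ∃ a : ℝ, (a = 1 ∨ a = -1) ∧ ∀ x, 0 ≤ x → φ (-x) = a * φ x := by
    rcases W2 with h0 | h0
    · refine ⟨1, Or.inl rfl, fun x hx => ?_⟩
      have := (k.add_mul hV h (-1)).zero hV (by simp) (by simp [h0]) x hx
      linarith
    · refine ⟨-1, Or.inr rfl, fun x hx => ?_⟩
      have := (k.add_mul hV h 1).zero hV (by simp [h0]) (by simp) x hx
      linarith
  obtain ⟨a, ha, hx⟩ := main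
  have hall : ∀ x, φ (-x) = a * φ x := by
    intro x
    rcases le_total 0 x with h0 | h0
    · exact hx x h0
    · have := hx (-x) (by linarith)
      rw [neg_neg] at this
      rcases ha with rfl | rfl <;> linarith
  refine ⟨a, ?_, ha, hall⟩
  have h1 : Tendsto (fun x => a * φ (-x)) atBot (𝓝 (a * 1)) :=
    (hlim.comp tendsto_neg_atBot_atTop).const_mul a
  rw [mul_one] at h1
  refine h1.congr fun x => ?_
  rw [← hall, neg_neg]
end

section
/- Suppose φ : ℝ → ℝ is bounded, not identically zero, φ' is absolutely continuous with φ'' = Vφ almost everywhere, and φ is either even (φ(−x) = φ(x) for all x) or odd (φ(−x) = −φ(x) for all x). Then V is even almost everywhere: V(−x) = V(x) for almost every x ∈ ℝ. -/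
open MeasureTheory Filter Topology Set

theorem unique_aux (V : ℝ → ℝ) (hV : Integrable V)
    (φ φd : ℝ → ℝ)
    (hderiv : ∀ x, HasDerivAt φ (φd x) x)
    (hVφ : Integrable (fun t => V t * φ t))
    (hode : ∀ x, φd x = φd 0 + ∫ t in (0:ℝ)..x, V t * φ t)
    (a : ℝ) (ha : φ a = 0) (hda : φd a = 0) : ∀ x, φ x = 0 := by
  have hφc : Continuous φ := continuous_iff_continuousAt.2 fun x => (hderiv x).continuousAt
  have hφdc : Continuous φd := by
    have : φd = fun x => φd 0 + ∫ t in (0:ℝ)..x, V t * φ t := funext hode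
    rw [this]
    exact continuous_const.add (hVφ.continuous_primitive 0)
  have hode' : ∀ b x, φd x = φd b + ∫ t in b..x, V t * φ t := by
    intro b x
    have := intervalIntegral.integral_add_adjacent_intervals (μ := volume)
      (hVφ.intervalIntegrable (a := 0) (b := b)) (hVφ.intervalIntegrable (a := b) (b := x))
    rw [hode x, hode b]; linarith
  have hclosed : IsClosed {x | φ x = 0 ∧ φd x = 0} :=
    (isClosed_eq hφc continuous_const).inter (isClosed_eq hφdc continuous_const)
  have hopen : IsOpen {x | φ x = 0 ∧ φd x = 0} := by
    rw [isOpen_iff_mem_nhds]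
    rintro b ⟨hb, hdb⟩
    have hP : Continuous fun x => ∫ t in b..x, ‖V t‖ := hV.norm.continuous_primitive b
    have hP0 : ∀ᶠ x in 𝓝 b, |(∫ t in b..x, ‖V t‖)| < 1 / 2 := by
      have h := hP.abs.tendsto b
      simp only [intervalIntegral.integral_same, abs_zero] at h
      exact h.eventually (gt_mem_nhds (by norm_num))
    obtain ⟨ε, hε, hball⟩ := Metric.eventually_nhds_iff_ball.1 hP0
    set δ := min (ε / 2) 1 with hδ
    have hδ0 : 0 < δ := by positivity
    have hδε : δ < ε := (min_le_left _ _).trans_lt (by linarith)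
    have hδ1 : δ ≤ 1 := min_le_right _ _
    have hbI : b ∈ Metric.closedBall b δ := Metric.mem_closedBall_self hδ0.le
    obtain ⟨m, hm, hmax⟩ := (isCompact_closedBall b δ).exists_isMaxOn ⟨b, hbI⟩
      hφc.abs.continuousOn
    have hmax' : ∀ x ∈ Metric.closedBall b δ, |φ x| ≤ |φ m| := fun x hx => hmax hx
    have hconv : Convex ℝ (Metric.closedBall b δ) := convex_closedBall b δ
    have hd : ∀ x ∈ Metric.closedBall b δ, ‖φd x‖ ≤ |φ m| / 2 := by
      intro x hx
      rw [hode' b x, hdb, zero_add]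
      have h1 : ‖∫ t in b..x, V t * φ t‖ ≤ |(∫ t in b..x, |φ m| * ‖V t‖)| := by
        apply intervalIntegral.norm_integral_le_abs_of_norm_le
        · refine (ae_restrict_iff' measurableSet_uIoc).2 (Eventually.of_forall fun t ht => ?_)
          have htI : t ∈ Metric.closedBall b δ :=
            hconv.ordConnected.uIcc_subset hbI hx (uIoc_subset_uIcc ht)
          rw [Real.norm_eq_abs, abs_mul, mul_comm]
          exact mul_le_mul_of_nonneg_right (hmax' t htI) (abs_nonneg _)
        · exact (hV.norm.const_mul _).intervalIntegrable
      rw [intervalIntegral.integral_const_mul, abs_mul, abs_abs] at h1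
      have h2 := hball x (Metric.closedBall_subset_ball hδε hx)
      nlinarith [abs_nonneg (φ m)]
    have hM : |φ m| = 0 := by
      have h := hconv.norm_image_sub_le_of_norm_hasDerivWithin_le
        (fun x _ => (hderiv x).hasDerivWithinAt) hd hbI hm
      rw [hb, sub_zero, Real.norm_eq_abs] at h
      have h3 : ‖m - b‖ ≤ 1 := by
        rw [← dist_eq_norm]; exact (Metric.mem_closedBall.1 hm).trans hδ1
      nlinarith [abs_nonneg (φ m)]
    filter_upwards [Metric.closedBall_mem_nhds b hδ0] with x hx
    have h1 := hmax' x hx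
    have h2 := hd x hx
    rw [hM] at h1 h2
    refine ⟨abs_nonpos_iff.1 h1, norm_le_zero_iff.1 (by simpa using h2)⟩
  have huniv := IsClopen.eq_univ ⟨hclosed, hopen⟩ ⟨a, ha, hda⟩
  intro x
  have : x ∈ {x | φ x = 0 ∧ φd x = 0} := by rw [huniv]; trivial
  exact this.1

/-- If `φ` is a bounded, not identically zero, zero-energy solution (`φ'` absolutely continuous
with `φ'' = Vφ` a.e., encoded by the integral identity for the everywhere-derivative `φd`) which is
either even or odd, then `V` is even almost everywhere. -/
theorem statement_4 (V : ℝ → ℝ) (hVmeas : Measurable V)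
    (hVint : Integrable (fun y : ℝ => jap y * |V y|))
    (φ φd : ℝ → ℝ)
    (hbd : ∃ B : ℝ, ∀ x, |φ x| ≤ B)
    (hnz : ¬ ∀ x, φ x = 0)
    (hderiv : ∀ x, HasDerivAt φ (φd x) x)
    (hode : ∀ x, φd x = φd 0 + ∫ t in (0:ℝ)..x, V t * φ t)
    (hpar : (∀ x, φ (-x) = φ x) ∨ (∀ x, φ (-x) = - φ x)) :
    ∀ᵐ x ∂(volume : Measure ℝ), V (-x) = V x := by
  obtain ⟨B, hB⟩ := hbd
  have hV : Integrable V := by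
    refine hVint.mono hVmeas.aestronglyMeasurable (Eventually.of_forall fun x => ?_)
    have h1 : 1 ≤ jap x := by
      unfold jap
      rw [Real.one_le_sqrt]
      nlinarith [sq_nonneg x]
    rw [Real.norm_eq_abs, Real.norm_eq_abs, abs_mul, abs_abs]
    have := le_abs_self (jap x)
    nlinarith [abs_nonneg (V x)]
  have hφc : Continuous φ := continuous_iff_continuousAt.2 fun x => (hderiv x).continuousAt
  have hVφ : Integrable (fun t => V t * φ t) :=
    hV.mul_bdd (c := B) hφc.aestronglyMeasurable (Eventually.of_forall fun x => by simpa using hB x)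
  have hne : ∀ x, φ x = 0 → φd x ≠ 0 := fun x h1 h2 =>
    hnz (unique_aux V hV φ φd hderiv hVφ hode x h1 h2)
  have hcod : {x | φ x ≠ 0} ∈ codiscrete ℝ := by
    rw [mem_codiscrete]
    intro x
    rw [disjoint_principal_right, compl_compl]
    by_cases hx : φ x = 0
    · exact (hderiv x).eventually_ne (hne x hx)
    · exact ((hφc.continuousAt (x := x)).eventually_ne hx).filter_mono nhdsWithin_le_nhds
  have hae : ∀ᵐ x ∂(volume : Measure ℝ), φ x ≠ 0 := by
    have h := ae_restrict_le_codiscreteWithin (μ := (volume : Measure ℝ)) MeasurableSet.univ hcod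
    rwa [Measure.restrict_univ] at h
  have hD : ∀ᵐ x ∂(volume : Measure ℝ), HasDerivAt φd (V x * φ x) x := by
    filter_upwards [LocallyIntegrable.ae_hasDerivAt_integral hVφ.locallyIntegrable] with x hx
    have : φd = fun x => φd 0 + ∫ t in (0:ℝ)..x, V t * φ t := funext hode
    rw [this]
    exact (hx 0).const_add _
  have hDn : ∀ᵐ x ∂(volume : Measure ℝ), HasDerivAt φd (V (-x) * φ (-x)) (-x) :=
    (Measure.measurePreserving_neg (volume : Measure ℝ)).quasiMeasurePreserving.ae hD
  have hcomp : ∀ x, HasDerivAt (fun y => φ (-y)) (-φd (-x)) x := fun x => by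
    simpa [Function.comp_def] using (hderiv (-x)).comp x (hasDerivAt_neg x)
  filter_upwards [hae, hD, hDn] with x hx h1 h2
  have h3 : HasDerivAt (fun y => φd (-y)) (-(V (-x) * φ (-x))) x := by
    simpa [Function.comp_def] using h2.comp x (hasDerivAt_neg x)
  apply mul_right_cancel₀ hx
  rcases hpar with hp | hp
  · have hd : (fun y => φd (-y)) = fun y => - φd y := by
      funext y
      have h := hcomp y
      rw [funext hp] at h
      linarith [h.unique (hderiv y)]
    rw [hd] at h3
    have := h3.unique h1.neg
    rw [hp] at this
    linarith
  · have hd : (fun y => φd (-y)) = fun y => φd y := by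
      funext y
      have h := hcomp y
      rw [funext hp] at h
      linarith [h.unique (hderiv y).neg]
    rw [hd] at h3
    have := h3.unique h1
    rw [hp] at this
    linarith
end

section
/- There exists a universal constant C > 0 with the following property. Let B ⊆ ℝ, and let a : B × (0,∞) → ℂ be such that for each x ∈ B the map k ↦ a(x,k) is C¹ and |a(x,k)| + |k|·|∂_k a(x,k)| ≤ 1 for all x ∈ B and k > 0. Then for every t > 0, X ∈ ℝ, x ∈ B and every compactly supported C¹ function h : (0,∞) → ℂ, one has |∫_0^∞ e^{it(k−X)²} a(x,k) h(k) dk| ≤ C ( t^{−1/2} ‖h‖_{L^∞} + t^{−3/4} ‖h'‖_{L²(0,∞)} ). -/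
open MeasureTheory Filter Topology Set

lemma aux_ne {p q c δ k : ℝ} (hδ : 0 < δ) (hc : c + δ ≤ p ∨ q ≤ c - δ) (hk : k ∈ Icc p q) :
    δ ≤ |k - c| := by
  rcases hc with h | h
  · exact le_trans (by linarith [hk.1]) (le_abs_self _)
  · exact le_trans (by linarith [hk.2]) (neg_le_abs _)

lemma aux_ne' {p q c δ k : ℝ} (hδ : 0 < δ) (hc : c + δ ≤ p ∨ q ≤ c - δ) (hk : k ∈ Icc p q) :
    k - c ≠ 0 := by
  have := aux_ne hδ hc hk
  exact abs_pos.1 (lt_of_lt_of_le hδ this)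

lemma aux_cont {p q c δ : ℝ} (hδ : 0 < δ) (hc : c + δ ≤ p ∨ q ≤ c - δ) :
    ContinuousOn (fun k : ℝ => (k - c)⁻¹) (Icc p q) := by
  refine ContinuousOn.inv₀ (by fun_prop) ?_
  intro k hk
  exact aux_ne' hδ hc hk

lemma aux_int {p q c δ : ℝ} (hpq : p ≤ q) (hδ : 0 < δ) (hc : c + δ ≤ p ∨ q ≤ c - δ) :
    ∫ k in p..q, ((k - c)⁻¹) ^ 2 ≤ δ⁻¹ := by
  have h1 : ∫ k in p..q, ((k - c)⁻¹) ^ 2 = -(q - c)⁻¹ - -(p - c)⁻¹ := by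
    apply intervalIntegral.integral_eq_sub_of_hasDerivAt (f := fun k => -(k - c)⁻¹)
    · intro k hk
      rw [uIcc_of_le hpq] at hk
      have hne := aux_ne' hδ hc hk
      have := (((hasDerivAt_id k).sub_const c).inv hne).neg
      refine this.congr_deriv ?_
      simp only [id]
      field_simp
    · apply ContinuousOn.intervalIntegrable
      rw [uIcc_of_le hpq]
      exact (aux_cont hδ hc).pow 2
  rw [h1]
  rcases hc with h | h
  · have a1 : (p - c)⁻¹ ≤ δ⁻¹ := inv_anti₀ hδ (by linarith)
    have a2 : 0 ≤ (q - c)⁻¹ := inv_nonneg.2 (by linarith)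
    linarith
  · have a1 : (c - q)⁻¹ ≤ δ⁻¹ := inv_anti₀ hδ (by linarith)
    have a2 : 0 ≤ (c - p)⁻¹ := inv_nonneg.2 (by linarith)
    have e1 : -(q - c)⁻¹ = (c - q)⁻¹ := by rw [← inv_neg]; congr 1; ring
    have e2 : -(p - c)⁻¹ = (c - p)⁻¹ := by rw [← inv_neg]; congr 1; ring
    rw [e1, e2]; linarith

lemma aux_cs {p q : ℝ} (hpq : p ≤ q) {f g : ℝ → ℝ} (hf : ContinuousOn f (Icc p q))
    (hg : ContinuousOn g (Icc p q)) (hf0 : ∀ k ∈ Icc p q, 0 ≤ f k) (hg0 : ∀ k ∈ Icc p q, 0 ≤ g k) :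
    ∫ k in p..q, f k * g k ≤ √(∫ k in p..q, f k ^ 2) * √(∫ k in p..q, g k ^ 2) := by
  rw [intervalIntegral.integral_of_le hpq, intervalIntegral.integral_of_le hpq,
    intervalIntegral.integral_of_le hpq]
  have key : ∀ f : ℝ → ℝ, ContinuousOn f (Icc p q) →
      MemLp f (ENNReal.ofReal 2) (volume.restrict (Ioc p q)) := by
    intro f hf
    obtain ⟨C, hC⟩ := isCompact_Icc.exists_bound_of_continuousOn hf
    refine MemLp.of_bound
      ((hf.mono Ioc_subset_Icc_self).aestronglyMeasurable measurableSet_Ioc) C ?_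
    filter_upwards [ae_restrict_mem measurableSet_Ioc] with k hk
    exact hC k (Ioc_subset_Icc_self hk)
  have := integral_mul_le_Lp_mul_Lq_of_nonneg (μ := volume.restrict (Ioc p q)) (p := 2) (q := 2)
    (f := f) (g := g) Real.HolderConjugate.two_two ?_ ?_ (key f hf) (key g hg)
  · simpa [Real.sqrt_eq_rpow] using this
  · filter_upwards [ae_restrict_mem measurableSet_Ioc] with k hk
    exact hf0 k (Ioc_subset_Icc_self hk)
  · filter_upwards [ae_restrict_mem measurableSet_Ioc] with k hk
    exact hg0 k (Ioc_subset_Icc_self hk)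

lemma norm_E (t X k : ℝ) :
    ‖Complex.exp (Complex.I * (t : ℂ) * ((k : ℂ) - (X : ℂ)) ^ 2)‖ = 1 := by
  have : Complex.I * (t : ℂ) * ((k : ℂ) - (X : ℂ)) ^ 2 = ((t * (k - X) ^ 2 : ℝ) : ℂ) * Complex.I := by
    push_cast; ring
  rw [this, Complex.norm_exp_ofReal_mul_I]

lemma deriv_E (t X k : ℝ) :
    HasDerivAt (fun k : ℝ => Complex.exp (Complex.I * (t : ℂ) * ((k : ℂ) - (X : ℂ)) ^ 2))
      (Complex.exp (Complex.I * (t : ℂ) * ((k : ℂ) - (X : ℂ)) ^ 2) *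
        (2 * Complex.I * t * ((k : ℂ) - X))) k := by
  have h1 : HasDerivAt (fun k : ℝ => (k : ℂ) - (X : ℂ)) 1 k :=
    (Complex.ofRealCLM.hasDerivAt (x := k)).sub_const _
  have h2 := ((h1.pow 2).const_mul (Complex.I * (t : ℂ))).cexp
  refine h2.congr_deriv ?_
  simp; ring

lemma main_interval {p q X δ t M S : ℝ} (α h : ℝ → ℂ) (hδ : 0 < δ) (ht : t * δ ^ 2 = 1)
    (hα : ContDiffOn ℝ 1 α (Ioi 0)) (hb : ∀ k, 0 < k → ‖α k‖ + |k| * ‖deriv α k‖ ≤ 1)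
    (hh : ContDiff ℝ 1 h) (hM : ∀ k, ‖h k‖ ≤ M) (hp : δ ≤ p) (hpq : p ≤ q)
    (hX : X + δ ≤ p ∨ q ≤ X - δ)
    (hS : ∫ k in p..q, ‖deriv h k‖ ^ 2 ≤ S) :
    ‖∫ k in p..q, Complex.exp (Complex.I * (t : ℂ) * ((k : ℂ) - (X : ℂ)) ^ 2) * α k * h k‖ ≤
      2 * (δ * M) + δ * √δ * √S := by
  have hM0 : 0 ≤ M := (norm_nonneg _).trans (hM 0)
  have htpos : 0 < t := by
    by_contra hcon
    push Not at hcon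
    nlinarith [sq_nonneg δ]
  have h0 : (0:ℝ) + δ ≤ p ∨ q ≤ 0 - δ := Or.inl (by linarith)
  have hpos : ∀ k ∈ Icc p q, 0 < k := fun k hk => by linarith [hk.1]
  have hsub : Icc p q ⊆ Ioi 0 := hpos
  have hαc : ContinuousOn α (Icc p q) := hα.continuousOn.mono hsub
  have hα'c : ContinuousOn (deriv α) (Icc p q) :=
    (hα.continuousOn_deriv_of_isOpen isOpen_Ioi le_rfl).mono hsub
  have hh'c : Continuous (deriv h) := hh.continuous_deriv le_rfl
  have hhc : Continuous h := hh.continuous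
  set E : ℝ → ℂ := fun k => Complex.exp (Complex.I * (t : ℂ) * ((k : ℂ) - (X : ℂ)) ^ 2) with hE
  have hEc : Continuous E := by rw [hE]; fun_prop
  have hEn : ∀ k, ‖E k‖ = 1 := fun k => norm_E t X k
  set w : ℝ → ℂ := fun k => 2 * Complex.I * t * ((k : ℂ) - X) with hw
  have hwn : ∀ k, ‖w k‖ = 2 * t * |k - X| := by
    intro k
    have : (k : ℂ) - X = ((k - X : ℝ) : ℂ) := by push_cast; ring
    simp only [hw, this, norm_mul, Complex.norm_I, Complex.norm_real, Real.norm_eq_abs,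
      abs_of_pos htpos]
    simp
  have hw0 : ∀ k ∈ Icc p q, w k ≠ 0 := by
    intro k hk
    rw [← norm_ne_zero_iff, hwn]
    have : 0 < |k - X| := lt_of_lt_of_le hδ (aux_ne hδ hX hk)
    positivity
  have hwc : Continuous w := by rw [hw]; fun_prop
  set R : ℝ → ℂ := fun k => E k * ((deriv α k * h k + α k * deriv h k) * (w k)⁻¹
      - α k * h k * (2 * Complex.I * t) * ((w k)⁻¹) ^ 2) with hR
  have hwic : ContinuousOn (fun k => (w k)⁻¹) (Icc p q) := hwc.continuousOn.inv₀ hw0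
  have hRc : ContinuousOn R (Icc p q) := by
    rw [hR]
    have := hEc.continuousOn (s := Icc p q)
    have := hhc.continuousOn (s := Icc p q)
    have := hh'c.continuousOn (s := Icc p q)
    fun_prop
  have hFc : ContinuousOn (fun k => E k * α k * h k) (Icc p q) := by
    have := hEc.continuousOn (s := Icc p q)
    have := hhc.continuousOn (s := Icc p q)
    fun_prop
  have hFi : IntervalIntegrable (fun k => E k * α k * h k) volume p q :=
    ContinuousOn.intervalIntegrable (by rwa [uIcc_of_le hpq])
  have hRi : IntervalIntegrable R volume p q :=
    ContinuousOn.intervalIntegrable (by rwa [uIcc_of_le hpq])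
  set G : ℝ → ℂ := fun k => E k * (α k * h k * (w k)⁻¹) with hG
  have hftc : ∫ k in p..q, (E k * α k * h k + R k) = G q - G p := by
    apply intervalIntegral.integral_eq_sub_of_hasDerivAt
    · intro k hk
      rw [uIcc_of_le hpq] at hk
      have d1 : HasDerivAt E (E k * w k) k := deriv_E t X k
      have d2 : HasDerivAt α (deriv α k) k :=
        ((hα.differentiableOn one_ne_zero).differentiableAt
          (isOpen_Ioi.mem_nhds (hpos k hk))).hasDerivAt
      have d3 : HasDerivAt h (deriv h k) k := (hh.differentiable one_ne_zero k).hasDerivAt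
      have d4 : HasDerivAt w (2 * Complex.I * t) k := by
        have h1 : HasDerivAt (fun k : ℝ => (k : ℂ) - (X : ℂ)) 1 k :=
          (Complex.ofRealCLM.hasDerivAt (x := k)).sub_const _
        simpa using h1.const_mul (2 * Complex.I * (t:ℂ))
      have d5 := d1.mul ((d2.mul d3).mul (d4.fun_inv (hw0 k hk)))
      refine d5.congr_deriv ?_
      have := hw0 k hk
      simp only [hR, Pi.mul_apply]
      field_simp
      ring
    · exact hFi.add hRi
  rw [intervalIntegral.integral_add hFi hRi] at hftc
  have hGb : ∀ k ∈ Icc p q, ‖G k‖ ≤ δ * M / 2 := by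
    intro k hk
    have h1 := aux_ne hδ hX hk
    have h2 : ‖α k‖ ≤ 1 := by
      have := hb k (hpos k hk)
      have : 0 ≤ |k| * ‖deriv α k‖ := by positivity
      linarith
    simp only [hG, norm_mul, hEn, norm_inv, hwn, one_mul]
    have h3 : (2 * t * |k - X|)⁻¹ ≤ δ / 2 := by
      have : (2 * t * |k - X|)⁻¹ ≤ (2 * t * δ)⁻¹ := by
        apply inv_anti₀ (by positivity)
        gcongr
      refine this.trans (le_of_eq ?_)
      field_simp
      linarith
    calc ‖α k‖ * ‖h k‖ * (2 * t * |k - X|)⁻¹ ≤ 1 * M * (δ / 2) := by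
          gcongr
          exact hM k
      _ = _ := by ring
  have hδ2 : (2 * t)⁻¹ = δ ^ 2 / 2 := by
    field_simp; linarith
  have hRb : ∀ k ∈ Icc p q, ‖R k‖ ≤ δ ^ 2 / 2 * (M / 2 * ((k - 0)⁻¹) ^ 2
      + 3 / 2 * M * ((k - X)⁻¹) ^ 2 + ‖deriv h k‖ * |(k - X)⁻¹|) := by
    intro k hk
    have hk0 := hpos k hk
    have hbk := hb k hk0
    rw [abs_of_pos hk0] at hbk
    have h2 : ‖α k‖ ≤ 1 := by
      have : 0 ≤ k * ‖deriv α k‖ := by positivity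
      linarith
    have h3 : ‖deriv α k‖ ≤ k⁻¹ := by
      rw [← one_div, le_div_iff₀ hk0]
      linarith [norm_nonneg (α k)]
    set u := |(k - X)⁻¹| with hu
    have hu0 : 0 ≤ u := abs_nonneg _
    have hwi : ‖(w k)⁻¹‖ = δ ^ 2 / 2 * u := by
      rw [norm_inv, hwn, mul_inv, hδ2, hu, abs_inv]
    have hu2 : ((k - X)⁻¹) ^ 2 = u ^ 2 := by rw [hu, sq_abs]
    have h2t : ‖(2 * Complex.I * t : ℂ)‖ = 2 * t := by simp [abs_of_pos htpos]
    have hMk := hM k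
    calc ‖R k‖ = ‖(deriv α k * h k + α k * deriv h k) * (w k)⁻¹
      - α k * h k * (2 * Complex.I * t) * ((w k)⁻¹) ^ 2‖ := by
          simp only [hR]; rw [norm_mul, hEn, one_mul]
      _ ≤ (‖deriv α k‖ * ‖h k‖ + ‖α k‖ * ‖deriv h k‖) * ‖(w k)⁻¹‖ +
          ‖α k‖ * ‖h k‖ * ‖(2 * Complex.I * t : ℂ)‖ * ‖(w k)⁻¹‖ ^ 2 := by
          refine (norm_sub_le _ _).trans ?_
          simp only [norm_mul, norm_pow]
          gcongr
          refine (norm_add_le _ _).trans ?_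
          simp only [norm_mul]
          rfl
      _ ≤ (k⁻¹ * M + 1 * ‖deriv h k‖) * (δ ^ 2 / 2 * u) +
          1 * M * (2 * t) * (δ ^ 2 / 2 * u) ^ 2 := by
          rw [hwi, h2t]
          gcongr
      _ = δ ^ 2 / 2 * (M * (k⁻¹ * u) + M * u ^ 2 + ‖deriv h k‖ * u) := by
          linear_combination (M * δ ^ 2 * u ^ 2 / 2) * ht
      _ ≤ _ := by
          rw [hu2, sub_zero]
          have : k⁻¹ * u ≤ (k⁻¹ ^ 2 + u ^ 2) / 2 := by nlinarith [sq_nonneg (k⁻¹ - u)]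
          have := mul_le_mul_of_nonneg_left this hM0
          refine mul_le_mul_of_nonneg_left ?_ (by positivity)
          linarith
  have c1 := aux_cont hδ h0
  have c2 := aux_cont hδ hX
  have c3 : ContinuousOn (fun k => ‖deriv h k‖) (Icc p q) := hh'c.norm.continuousOn
  have ii : ∀ f : ℝ → ℝ, ContinuousOn f (Icc p q) → IntervalIntegrable f volume p q :=
    fun f hf => ContinuousOn.intervalIntegrable (by rwa [uIcc_of_le hpq])
  have i1 : IntervalIntegrable (fun k => M / 2 * ((k - 0)⁻¹) ^ 2) volume p q := ii _ ((c1.pow 2).const_mul (M / 2))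
  have i2 : IntervalIntegrable (fun k => 3 / 2 * M * ((k - X)⁻¹) ^ 2) volume p q := ii _ ((c2.pow 2).const_mul (3 / 2 * M))
  have i3 : IntervalIntegrable (fun k => ‖deriv h k‖ * |(k - X)⁻¹|) volume p q := ii _ (c3.mul c2.abs)
  have hRint : ‖∫ k in p..q, R k‖ ≤ δ * M + δ * √δ * √S := by
    calc ‖∫ k in p..q, R k‖ ≤ ∫ k in p..q, δ ^ 2 / 2 * (M / 2 * ((k - 0)⁻¹) ^ 2
      + 3 / 2 * M * ((k - X)⁻¹) ^ 2 + ‖deriv h k‖ * |(k - X)⁻¹|) := by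
          apply intervalIntegral.norm_integral_le_of_norm_le hpq
          · exact Eventually.of_forall fun k hk => hRb k (Ioc_subset_Icc_self hk)
          · exact ((i1.add i2).add i3).const_mul _
      _ = δ ^ 2 / 2 * (M / 2 * (∫ k in p..q, ((k - 0)⁻¹) ^ 2)
          + 3 / 2 * M * (∫ k in p..q, ((k - X)⁻¹) ^ 2)
          + ∫ k in p..q, ‖deriv h k‖ * |(k - X)⁻¹|) := by
          rw [intervalIntegral.integral_const_mul, intervalIntegral.integral_add (i1.add i2) i3,
            intervalIntegral.integral_add i1 i2, intervalIntegral.integral_const_mul,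
            intervalIntegral.integral_const_mul]
      _ ≤ δ ^ 2 / 2 * (M / 2 * δ⁻¹ + 3 / 2 * M * δ⁻¹ + √S * √(δ⁻¹)) := by
          gcongr
          · exact aux_int hpq hδ h0
          · exact aux_int hpq hδ hX
          · refine (aux_cs hpq c3 c2.abs (fun _ _ => norm_nonneg _)
              (fun _ _ => abs_nonneg _)).trans ?_
            simp only [sq_abs]
            gcongr
            exact aux_int hpq hδ hX
      _ = δ * M + δ * √δ * √S / 2 := by
          obtain ⟨s, hs, rfl⟩ : ∃ s, 0 < s ∧ δ = s ^ 2 :=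
            ⟨√δ, Real.sqrt_pos.2 hδ, (Real.sq_sqrt hδ.le).symm⟩
          rw [Real.sqrt_inv, Real.sqrt_sq hs.le]
          field_simp
          ring
      _ ≤ _ := by
          have : 0 ≤ δ * √δ * √S := by positivity
          linarith
  have e : ∫ k in p..q, E k * α k * h k = G q - G p - ∫ k in p..q, R k := by
    rw [← hftc]; ring
  rw [e]
  have g1 := hGb q (right_mem_Icc.2 hpq)
  have g2 := hGb p (left_mem_Icc.2 hpq)
  have := norm_sub_le (G q - G p) (∫ k in p..q, R k)
  have := norm_sub_le (G q) (G p)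
  linarith

/-- Stationary phase type lemma: if `|a(x,k)| + |k||∂_k a(x,k)| ≤ 1` on `B × (0,∞)`, then for all
`t > 0`, `X ∈ ℝ`, `x ∈ B` and compactly supported `C¹` functions `h`,
`|∫_0^∞ e^{it(k−X)²} a(x,k) h(k) dk| ≤ C (t^{−1/2}‖h‖_∞ + t^{−3/4}‖h'‖_{L²(0,∞)})`
with a universal constant `C`. -/
theorem statement_5 : ∃ C : ℝ, 0 < C ∧
    ∀ (B : Set ℝ) (a : ℝ → ℝ → ℂ),
      (∀ x ∈ B, ContDiffOn ℝ 1 (fun k => a x k) (Set.Ioi (0:ℝ))) →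
      (∀ x ∈ B, ∀ k : ℝ, 0 < k →
        ‖a x k‖ + |k| * ‖deriv (fun k' => a x k') k‖ ≤ 1) →
      ∀ t : ℝ, 0 < t → ∀ X : ℝ, ∀ x ∈ B, ∀ h : ℝ → ℂ,
        ContDiff ℝ 1 h → HasCompactSupport h →
        ‖∫ k in Set.Ioi (0:ℝ),
            Complex.exp (Complex.I * (t : ℂ) * ((k : ℂ) - (X : ℂ)) ^ 2) * a x k * h k‖ ≤
          C * (t ^ (-(1/2) : ℝ) * (⨆ k : ℝ, ‖h k‖) +
               t ^ (-(3/4) : ℝ) * Real.sqrt (∫ k in Set.Ioi (0:ℝ), ‖deriv h k‖ ^ 2)) := by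
  refine ⟨7, by norm_num, ?_⟩
  intro B a ha hab t ht X x hx h hh hcs
  replace ha := ha x hx
  replace hab := hab x hx
  set α : ℝ → ℂ := fun k => a x k with hαdef
  obtain ⟨δ, hδ, htδ, h12, h34⟩ : ∃ δ : ℝ, 0 < δ ∧ t * δ ^ 2 = 1 ∧ t ^ (-(1/2) : ℝ) = δ ∧
      t ^ (-(3/4) : ℝ) = δ * √δ := by
    refine ⟨t ^ (-(1/2) : ℝ), Real.rpow_pos_of_pos ht _, ?_, rfl, ?_⟩
    · rw [← Real.rpow_natCast, ← Real.rpow_mul ht.le]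
      norm_num
      rw [Real.rpow_neg_one, mul_inv_cancel₀ ht.ne']
    · rw [Real.sqrt_eq_rpow, ← Real.rpow_mul ht.le, ← Real.rpow_add ht]
      norm_num
  rw [h12, h34]
  have hhc : Continuous h := hh.continuous
  set M := ⨆ k : ℝ, ‖h k‖ with hMdef
  have hM : ∀ k, ‖h k‖ ≤ M := by
    obtain ⟨C, hC⟩ := hcs.exists_bound_of_continuous hhc
    exact fun k => le_ciSup (f := fun k => ‖h k‖) ⟨C, by rintro _ ⟨y, rfl⟩; exact hC y⟩ k
  have hM0 : 0 ≤ M := (norm_nonneg _).trans (hM 0)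
  set S := ∫ k in Set.Ioi (0:ℝ), ‖deriv h k‖ ^ 2 with hSdef
  have hh'c : Continuous (deriv h) := hh.continuous_deriv le_rfl
  have hSi : Integrable (fun k => ‖deriv h k‖ ^ 2) := by
    apply Continuous.integrable_of_hasCompactSupport (by fun_prop)
    exact (hcs.deriv (𝕜 := ℝ)).comp_left (g := fun z : ℂ => ‖z‖ ^ 2) (by simp)
  have hS : ∀ p q, 0 ≤ p → p ≤ q → ∫ k in p..q, ‖deriv h k‖ ^ 2 ≤ S := by
    intro p q hp hpq
    rw [intervalIntegral.integral_of_le hpq]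
    apply setIntegral_mono_set hSi.integrableOn
    · exact Eventually.of_forall fun k => by positivity
    · exact Eventually.of_forall fun k hk => lt_of_le_of_lt hp hk.1
  set F : ℝ → ℂ := fun k =>
    Complex.exp (Complex.I * (t : ℂ) * ((k : ℂ) - (X : ℂ)) ^ 2) * α k * h k with hF
  have hFb : ∀ k, 0 < k → ‖F k‖ ≤ M := by
    intro k hk
    have h1 := hab k hk
    have h2 : ‖α k‖ ≤ 1 := by
      have : 0 ≤ |k| * ‖deriv α k‖ := by positivity
      linarith
    simp only [hF, norm_mul, norm_E, one_mul]
    calc ‖α k‖ * ‖h k‖ ≤ 1 * M := by gcongr; exact hM k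
      _ = M := one_mul _
  have hFc : ContinuousOn F (Ioi 0) := by
    have := ha.continuousOn
    have h1 : Continuous fun k : ℝ =>
      Complex.exp (Complex.I * (t : ℂ) * ((k : ℂ) - (X : ℂ)) ^ 2) := by fun_prop
    exact (h1.continuousOn.mul this).mul hhc.continuousOn
  have hFi : ∀ p q, 0 ≤ p → p ≤ q → IntervalIntegrable F volume p q := by
    intro p q hp hpq
    rw [intervalIntegrable_iff_integrableOn_Ioc_of_le hpq]
    refine ⟨(hFc.mono fun k hk => lt_of_le_of_lt hp hk.1).aestronglyMeasurable
      measurableSet_Ioc, ?_⟩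
    refine HasFiniteIntegral.restrict_of_bounded M (by simp) ?_
    filter_upwards [ae_restrict_mem measurableSet_Ioc] with k hk
    exact hFb k (lt_of_le_of_lt hp hk.1)
  obtain ⟨R0, hR0⟩ : ∃ R0 : ℝ, ∀ k, R0 < k → h k = 0 := by
    obtain ⟨R0, hR0⟩ := hcs.isCompact.bddAbove
    refine ⟨R0, fun k hk => ?_⟩
    by_contra hne
    exact absurd (hR0 (subset_tsupport _ hne)) (not_le.2 hk)
  set p2 := max δ (X - δ) with hp2
  set p3 := max δ (X + δ) with hp3
  set R := max p3 R0 with hR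
  have o1 : δ ≤ p2 := le_max_left _ _
  have o2 : p2 ≤ p3 := max_le_max le_rfl (by linarith)
  have o3 : p3 ≤ R := le_max_left _ _
  have hsplit : ∫ k in Ioi (0:ℝ), F k =
      (∫ k in (0:ℝ)..δ, F k) + (∫ k in δ..p2, F k) + (∫ k in p2..p3, F k) + ∫ k in p3..R, F k := by
    rw [intervalIntegral.integral_add_adjacent_intervals (hFi _ _ le_rfl hδ.le)
        (hFi _ _ hδ.le o1),
      intervalIntegral.integral_add_adjacent_intervals (hFi _ _ le_rfl (by linarith))
        (hFi _ _ (by linarith) o2),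
      intervalIntegral.integral_add_adjacent_intervals (hFi _ _ le_rfl (by linarith))
        (hFi _ _ (by linarith) o3),
      intervalIntegral.integral_of_le (by linarith)]
    apply setIntegral_eq_of_subset_of_forall_sdiff_eq_zero measurableSet_Ioi
    · exact fun k hk => hk.1
    · intro k hk
      have : R < k := by
        by_contra hcon
        exact hk.2 ⟨hk.1, not_lt.1 hcon⟩
      simp only [hF]
      rw [hR0 k (lt_of_le_of_lt (le_max_right _ _) this), mul_zero]
  have b1 : ‖∫ k in (0:ℝ)..δ, F k‖ ≤ M * δ := by
    have := intervalIntegral.norm_integral_le_of_norm_le_const (a := 0) (b := δ) (f := F) (C := M)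
      (fun k hk => hFb k (by rw [uIoc_of_le hδ.le] at hk; exact hk.1))
    rwa [sub_zero, abs_of_pos hδ] at this
  have b3 : ‖∫ k in p2..p3, F k‖ ≤ M * (2 * δ) := by
    have := intervalIntegral.norm_integral_le_of_norm_le_const (a := p2) (b := p3) (f := F) (C := M)
      (fun k hk => hFb k (by rw [uIoc_of_le o2] at hk; linarith [hk.1]))
    refine this.trans ?_
    rw [abs_of_nonneg (by linarith)]
    gcongr
    rw [sub_le_iff_le_add]
    apply max_le
    · linarith
    · linarith [le_max_right δ (X - δ)]
  have b2 : ‖∫ k in δ..p2, F k‖ ≤ 2 * (δ * M) + δ * √δ * √S := by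
    rcases le_total (X - δ) δ with hle | hle
    · rw [hp2, max_eq_left hle, intervalIntegral.integral_same, norm_zero]
      positivity
    · exact main_interval α h hδ htδ ha hab hh hM le_rfl o1 (Or.inr (by rw [hp2, max_eq_right hle]))
        (hS _ _ hδ.le o1)
  have b4 : ‖∫ k in p3..R, F k‖ ≤ 2 * (δ * M) + δ * √δ * √S :=
    main_interval α h hδ htδ ha hab hh hM (le_max_left _ _) o3 (Or.inl (le_max_right _ _))
        (hS _ _ (by linarith) o3)
  rw [hsplit]
  have n1 := norm_add_le ((∫ k in (0:ℝ)..δ, F k) + (∫ k in δ..p2, F k) + (∫ k in p2..p3, F k))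
    (∫ k in p3..R, F k)
  have n2 := norm_add_le ((∫ k in (0:ℝ)..δ, F k) + (∫ k in δ..p2, F k)) (∫ k in p2..p3, F k)
  have n3 := norm_add_le (∫ k in (0:ℝ)..δ, F k) (∫ k in δ..p2, F k)
  have : 0 ≤ δ * √δ * √S := by positivity
  linarith
end

section
/- There exists a universal constant C > 0 such that the following holds. Let β ∈ ℝ, M > 0, let Q : ℝ×ℝ → ℂ be measurable with |⟨x⟩^β Q(x,k)| ≤ M for all x, k, and let φ : ℝ → ℂ be measurable with |φ(k)| ≤ |k|^{1/2} for all k. Then for every t ≥ 0, every Schwartz function h : ℝ → ℂ, and every x ∈ ℝ: ⟨x⟩^β ( ∫_0^t | ∫_ℝ Q(x,k) φ(k) e^{ik²s} h(k) dk |² ds )^{1/2} ≤ C M ‖h‖_{L²(ℝ)}. -/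
open MeasureTheory Filter Topology Set

noncomputable def kerR (b u : ℝ) : ℝ := Real.sqrt (Real.pi / b) * Real.exp (-u ^ 2 / (4 * b))

lemma kerR_nonneg (b u : ℝ) : 0 ≤ kerR b u := by unfold kerR; positivity

lemma kerR_cont (b : ℝ) : Continuous (kerR b) := by unfold kerR; fun_prop

lemma kerR_symm (b u v : ℝ) : kerR b (u - v) = kerR b (v - u) := by
  unfold kerR
  rw [show (u - v) ^ 2 = (v - u) ^ 2 by ring]

lemma lintegral_kerR {b : ℝ} (hb : 0 < b) :
    ∫⁻ u, ENNReal.ofReal (kerR b u) = ENNReal.ofReal (2 * Real.pi) := by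
  have h4 : 0 < 1 / (4 * b) := by positivity
  have e : kerR b = fun u => Real.sqrt (Real.pi / b) * Real.exp (-(1 / (4 * b)) * u ^ 2) := by
    ext u; unfold kerR; congr 2; field_simp
  rw [← ofReal_integral_eq_lintegral_ofReal]
  · rw [e, integral_const_mul, integral_gaussian, ← Real.sqrt_mul (by positivity)]
    congr 1
    rw [show Real.pi / b * (Real.pi / (1 / (4 * b))) = (2 * Real.pi) ^ 2 by field_simp; ring]
    exact Real.sqrt_sq (by positivity)
  · rw [e]; exact (integrable_exp_neg_mul_sq h4).const_mul _
  · exact Eventually.of_forall fun u => kerR_nonneg b u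

lemma half_kerR {b : ℝ} (hb : 0 < b) (k : ℝ) (S : Set ℝ) (hS : MeasurableSet S)
    (hinj : InjOn (fun l : ℝ => l ^ 2) S) :
    ∫⁻ l in S, ENNReal.ofReal |l| * ENNReal.ofReal (kerR b (k ^ 2 - l ^ 2))
      ≤ ENNReal.ofReal Real.pi := by
  have h1 := lintegral_image_eq_lintegral_abs_deriv_mul (f := fun l : ℝ => l ^ 2)
    (f' := fun l => 2 * l) hS
    (fun x _ => by simpa using (hasDerivAt_pow 2 x).hasDerivWithinAt) hinj
    (fun u => ENNReal.ofReal (kerR b (k ^ 2 - u)))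
  have h2 : ∫⁻ u in (fun l : ℝ => l ^ 2) '' S, ENNReal.ofReal (kerR b (k ^ 2 - u))
      ≤ ENNReal.ofReal (2 * Real.pi) := by
    refine (setLIntegral_le_lintegral _ _).trans ?_
    rw [lintegral_sub_left_eq_self (fun u => ENNReal.ofReal (kerR b u)), lintegral_kerR hb]
  rw [h1] at h2
  have h3 : ∫⁻ l in S, ENNReal.ofReal |2 * l| * ENNReal.ofReal (kerR b (k ^ 2 - l ^ 2))
      = 2 * ∫⁻ l in S, ENNReal.ofReal |l| * ENNReal.ofReal (kerR b (k ^ 2 - l ^ 2)) := by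
    rw [← lintegral_const_mul' _ _ (by simp)]
    congr 1; ext l
    rw [abs_mul, ENNReal.ofReal_mul (by positivity), mul_assoc]; simp
  rw [h3, ENNReal.ofReal_mul (by positivity)] at h2
  simp only [ENNReal.ofReal_ofNat] at h2
  exact (ENNReal.mul_le_mul_iff_right (by simp) (by simp)).1 h2

lemma full_kerR {b : ℝ} (hb : 0 < b) (k : ℝ) :
    ∫⁻ l, ENNReal.ofReal |l| * ENNReal.ofReal (kerR b (k ^ 2 - l ^ 2))
      ≤ ENNReal.ofReal (2 * Real.pi) := by
  rw [← lintegral_add_compl _ (measurableSet_Ici (a := (0:ℝ))),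
    two_mul, ENNReal.ofReal_add (by positivity) (by positivity)]
  refine add_le_add (half_kerR hb k _ measurableSet_Ici ?_)
    (half_kerR hb k _ measurableSet_Ici.compl ?_)
  · intro x hx y hy h
    simp only [mem_Ici] at *
    exact (sq_eq_sq₀ hx hy).1 h
  · intro x hx y hy h
    simp only [mem_compl_iff, mem_Ici, not_le] at *
    nlinarith [(sq_eq_sq₀ (neg_nonneg.2 hx.le) (neg_nonneg.2 hy.le)).1 (by simpa using h)]

lemma norm_gauss {b : ℝ} (hb : 0 < b) (u : ℝ) :
    ‖∫ s : ℝ, Complex.exp (Complex.I * u * s) * Complex.exp (-b * s ^ 2)‖ = kerR b u := by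
  rw [fourierIntegral_gaussian (b := (b : ℂ)) (by simpa using hb) (u : ℂ), norm_mul]
  unfold kerR
  congr 1
  · rw [← Complex.ofReal_div, Complex.norm_cpow_eq_rpow_re_of_pos (by positivity), Real.sqrt_eq_rpow]
    norm_num
  · rw [Complex.norm_exp]
    congr 1
    rw [show (-(u:ℂ) ^ 2 / (4 * b)) = ((-u ^ 2 / (4 * b) : ℝ) : ℂ) by push_cast; ring]
    exact Complex.ofReal_re _

lemma schur {b : ℝ} (hb : 0 < b) (n H : ℝ → ℝ) (hH : Measurable H) (hH0 : ∀ k, 0 ≤ H k)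
    (hn0 : ∀ k, 0 ≤ n k) (hn : ∀ k, n k ≤ Real.sqrt |k| * H k) :
    ∫⁻ k, ∫⁻ l, ENNReal.ofReal (n k * n l * kerR b (k ^ 2 - l ^ 2))
      ≤ ENNReal.ofReal (2 * Real.pi) * ∫⁻ k, ENNReal.ofReal (H k ^ 2) := by
  set A : ℝ → ℝ → ENNReal := fun k l => ENNReal.ofReal (H k ^ 2) *
    (ENNReal.ofReal |l| * ENNReal.ofReal (kerR b (k ^ 2 - l ^ 2))) with hA
  have mA : Measurable (Function.uncurry A) := by
    have := (kerR_cont b).measurable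
    simp only [hA, Function.uncurry_def]
    fun_prop
  have hA1 : ∫⁻ k, ∫⁻ l, A k l ≤ ENNReal.ofReal (2 * Real.pi) * ∫⁻ k, ENNReal.ofReal (H k ^ 2) := by
    rw [← lintegral_const_mul' _ _ ENNReal.ofReal_ne_top]
    refine lintegral_mono fun k => ?_
    simp only [hA]
    rw [lintegral_const_mul' _ _ (by simp), mul_comm]
    gcongr
    exact full_kerR hb k
  have hA2 : ∫⁻ k, ∫⁻ l, A l k = ∫⁻ k, ∫⁻ l, A k l :=
    lintegral_lintegral_swap (f := fun k l => A l k) (mA.comp measurable_swap).aemeasurable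
  have pt : ∀ k l, 2 * ENNReal.ofReal (n k * n l * kerR b (k ^ 2 - l ^ 2)) ≤ A k l + A l k := by
    intro k l
    simp only [hA]
    rw [kerR_symm b (l ^ 2) (k ^ 2), ← ENNReal.ofReal_mul (by positivity),
      ← ENNReal.ofReal_mul (by positivity), ← ENNReal.ofReal_mul (by positivity),
      ← ENNReal.ofReal_mul (by positivity),
      ← ENNReal.ofReal_add (by have := kerR_nonneg b (k ^ 2 - l ^ 2); positivity)
        (by have := kerR_nonneg b (k ^ 2 - l ^ 2); positivity),
      show (2 : ENNReal) = ENNReal.ofReal 2 by simp, ← ENNReal.ofReal_mul (by positivity)]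
    apply ENNReal.ofReal_le_ofReal
    have h1 : n k * n l ≤ (Real.sqrt |k| * H k) * (Real.sqrt |l| * H l) :=
      mul_le_mul (hn k) (hn l) (hn0 l) (mul_nonneg (by positivity) (hH0 k))
    have h2 : 2 * (n k * n l) ≤ H k ^ 2 * |l| + H l ^ 2 * |k| := by
      have e1 := Real.sq_sqrt (abs_nonneg k)
      have e2 := Real.sq_sqrt (abs_nonneg l)
      rw [← e1, ← e2, e1, e2]
      nlinarith [sq_nonneg (H k * Real.sqrt |l| - H l * Real.sqrt |k|)]
    have := mul_le_mul_of_nonneg_right h2 (kerR_nonneg b (k ^ 2 - l ^ 2))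
    linarith
  have h2 : 2 * ∫⁻ k, ∫⁻ l, ENNReal.ofReal (n k * n l * kerR b (k ^ 2 - l ^ 2))
      ≤ 2 * (ENNReal.ofReal (2 * Real.pi) * ∫⁻ k, ENNReal.ofReal (H k ^ 2)) := by
    calc _ = ∫⁻ k, ∫⁻ l, 2 * ENNReal.ofReal (n k * n l * kerR b (k ^ 2 - l ^ 2)) := by
          rw [← lintegral_const_mul' _ _ (by simp)]
          congr 1; ext k
          rw [lintegral_const_mul' _ _ (by simp)]
      _ ≤ ∫⁻ k, ∫⁻ l, (A k l + A l k) := lintegral_mono fun k => lintegral_mono fun l => pt k l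
      _ = ∫⁻ k, ((∫⁻ l, A k l) + ∫⁻ l, A l k) := by
          congr 1; ext k
          exact lintegral_add_left (mA.comp measurable_prodMk_left) _
      _ = (∫⁻ k, ∫⁻ l, A k l) + ∫⁻ k, ∫⁻ l, A l k :=
          lintegral_add_left mA.lintegral_prod_right' _
      _ ≤ _ := by rw [hA2, ← two_mul]; gcongr
  exact (ENNReal.mul_le_mul_iff_right (by simp) (by simp)).1 h2

lemma core {b : ℝ} (hb : 0 < b) (g : ℝ → ℂ) (hg : Integrable g) (H : ℝ → ℝ) (hH : Measurable H)
    (hH0 : ∀ k, 0 ≤ H k) (hH2 : Integrable fun k => H k ^ 2)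
    (hn : ∀ k, ‖g k‖ ≤ Real.sqrt |k| * H k) :
    Integrable (fun s : ℝ => Real.exp (-b * s ^ 2) *
        ‖∫ k : ℝ, g k * Complex.exp (Complex.I * (k : ℂ) ^ 2 * (s : ℂ))‖ ^ 2) ∧
    ∫ s : ℝ, Real.exp (-b * s ^ 2) *
        ‖∫ k : ℝ, g k * Complex.exp (Complex.I * (k : ℂ) ^ 2 * (s : ℂ))‖ ^ 2
      ≤ 2 * Real.pi * ∫ k, H k ^ 2 := by
  set F : ℝ → ℂ := fun s => ∫ k : ℝ, g k * Complex.exp (Complex.I * (k : ℂ) ^ 2 * (s : ℂ)) with hF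
  have hgc : Integrable (fun k => (starRingEnd ℂ) (g k)) := by
    refine (integrable_norm_iff ?_).1 (by simpa using hg.norm)
    exact Complex.continuous_conj.comp_aestronglyMeasurable hg.1
  set G : ℝ × ℝ → ℂ := fun p => g p.1 * (starRingEnd ℂ) (g p.2) with hG
  have hGi : Integrable G (volume.prod volume) := hg.mul_prod hgc
  have hga : Integrable (fun s : ℝ => Complex.exp (-b * s ^ 2)) := by
    have := (integrable_exp_neg_mul_sq hb).ofReal (𝕜 := ℂ)
    refine this.congr (Eventually.of_forall fun s => ?_)
    simp
  set Φ : ℝ → ℝ × ℝ → ℂ := fun s p =>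
    Complex.exp (Complex.I * ((p.1 ^ 2 - p.2 ^ 2 : ℝ) : ℂ) * s) * (Complex.exp (-b * s ^ 2) * G p) with hΦ
  have hΦi : Integrable (Function.uncurry Φ) (volume.prod (volume.prod volume)) := by
    refine Integrable.bdd_mul (c := 1) (hga.mul_prod hGi) ?_ ?_
    · exact Continuous.aestronglyMeasurable (by fun_prop)
    · refine Eventually.of_forall fun x => ?_
      rw [mul_assoc, ← Complex.ofReal_mul, Complex.norm_exp_I_mul_ofReal]
  have key : ∀ s : ℝ, ∫ p, Φ s p ∂(volume.prod volume)
      = ((Real.exp (-b * s ^ 2) * ‖F s‖ ^ 2 : ℝ) : ℂ) := by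
    intro s
    have h1 : ∀ p : ℝ × ℝ, Φ s p = Complex.exp (-b * s ^ 2) *
        ((g p.1 * Complex.exp (Complex.I * (p.1 : ℂ) ^ 2 * (s : ℂ))) *
          (starRingEnd ℂ) (g p.2 * Complex.exp (Complex.I * (p.2 : ℂ) ^ 2 * (s : ℂ)))) := by
      intro p
      simp only [hΦ, hG, map_mul, ← Complex.exp_conj, map_pow, Complex.conj_I, Complex.conj_ofReal]
      rw [show Complex.I * ((p.1 ^ 2 - p.2 ^ 2 : ℝ) : ℂ) * s
        = Complex.I * (p.1 : ℂ) ^ 2 * (s : ℂ) + (-Complex.I) * (p.2 : ℂ) ^ 2 * (s : ℂ) by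
          push_cast; ring, Complex.exp_add]
      ring
    simp_rw [h1]
    rw [integral_const_mul, integral_prod_mul
      (fun k : ℝ => g k * Complex.exp (Complex.I * (k : ℂ) ^ 2 * (s : ℂ)))
      (fun k : ℝ => (starRingEnd ℂ) (g k * Complex.exp (Complex.I * (k : ℂ) ^ 2 * (s : ℂ)))),
      integral_conj, Complex.mul_conj, Complex.normSq_eq_norm_sq]
    push_cast
    rfl
  have hFint : Integrable (fun s : ℝ => Real.exp (-b * s ^ 2) * ‖F s‖ ^ 2) := by
    have := hΦi.integral_prod_left
    simp only [Function.uncurry_apply_pair, key] at this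
    exact this.re
  refine ⟨hFint, ?_⟩
  have hK : Integrable (fun p : ℝ × ℝ => ‖g p.1‖ * ‖g p.2‖ * kerR b (p.1 ^ 2 - p.2 ^ 2))
      (volume.prod volume) := by
    have := hΦi.integral_prod_right.norm
    refine this.congr (Eventually.of_forall fun p => ?_)
    simp only [Function.uncurry_apply_pair, hΦ, ← mul_assoc]
    rw [integral_mul_const, norm_mul, norm_gauss hb]
    simp [hG, mul_comm]
  have e1 : ((∫ s : ℝ, Real.exp (-b * s ^ 2) * ‖F s‖ ^ 2 : ℝ) : ℂ)
      = ∫ p, (∫ s, Φ s p) ∂(volume.prod volume) := by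
    rw [← integral_integral_swap hΦi, ← integral_complex_ofReal]
    simp_rw [key]
  have e2 : ∫ s : ℝ, Real.exp (-b * s ^ 2) * ‖F s‖ ^ 2
      ≤ ∫ p : ℝ × ℝ, ‖g p.1‖ * ‖g p.2‖ * kerR b (p.1 ^ 2 - p.2 ^ 2) ∂(volume.prod volume) := by
    refine (le_abs_self _).trans ?_
    rw [← Real.norm_eq_abs, ← Complex.norm_real, e1]
    refine (norm_integral_le_integral_norm _).trans (le_of_eq ?_)
    congr 1; ext p
    simp only [hΦ, ← mul_assoc]
    rw [integral_mul_const, norm_mul, norm_gauss hb]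
    simp [hG, mul_comm]
  refine e2.trans ?_
  have hnn : 0 ≤ ∫ k, H k ^ 2 := integral_nonneg fun k => sq_nonneg _
  rw [← ENNReal.ofReal_le_ofReal_iff (by positivity), ofReal_integral_eq_lintegral_ofReal hK
    (Eventually.of_forall fun p => by
      have := kerR_nonneg b (p.1 ^ 2 - p.2 ^ 2); simp only [Pi.zero_apply]; positivity),
    lintegral_prod _ hK.1.aemeasurable.ennreal_ofReal, ENNReal.ofReal_mul (by positivity),
    ofReal_integral_eq_lintegral_ofReal hH2 (Eventually.of_forall fun p => sq_nonneg _)]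
  exact schur hb (fun k => ‖g k‖) H hH hH0 (fun k => norm_nonneg _) hn

lemma core_t {t : ℝ} (ht : 0 ≤ t) (g : ℝ → ℂ) (hg : Integrable g) (H : ℝ → ℝ) (hH : Measurable H)
    (hH0 : ∀ k, 0 ≤ H k) (hH2 : Integrable fun k => H k ^ 2)
    (hn : ∀ k, ‖g k‖ ≤ Real.sqrt |k| * H k) :
    ∫ s in (0:ℝ)..t, ‖∫ k : ℝ, g k * Complex.exp (Complex.I * (k : ℂ) ^ 2 * (s : ℂ))‖ ^ 2
      ≤ Real.exp 1 * (2 * Real.pi) * ∫ k, H k ^ 2 := by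
  have hnn : 0 ≤ ∫ k, H k ^ 2 := integral_nonneg fun k => sq_nonneg _
  rcases ht.eq_or_lt with rfl | ht
  · simp only [intervalIntegral.integral_same]; positivity
  obtain ⟨hi, hle⟩ := core (b := 1 / t ^ 2) (by positivity) g hg H hH hH0 hH2 hn
  rw [intervalIntegral.integral_of_le ht.le, mul_assoc]
  refine le_trans ?_ (mul_le_mul_of_nonneg_left hle (Real.exp_pos 1).le)
  rw [← integral_const_mul]
  refine le_trans ?_ (setIntegral_le_integral (s := Ioc 0 t) (hi.const_mul _)
    (Eventually.of_forall fun s => by simp only [Pi.zero_apply]; positivity))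
  refine integral_mono_of_nonneg (Eventually.of_forall fun s => by
    simp only [Pi.zero_apply]; positivity) (hi.const_mul _).integrableOn ?_
  refine (ae_restrict_iff' measurableSet_Ioc).2 (Eventually.of_forall fun s hs => ?_)
  simp only [← mul_assoc, ← Real.exp_add]
  refine le_mul_of_one_le_left (by positivity) (Real.one_le_exp ?_)
  have : s ^ 2 / t ^ 2 ≤ 1 := by
    rw [div_le_one (by positivity)]
    exact pow_le_pow_left₀ hs.1.le hs.2 2
  have e : -(1 / t ^ 2) * s ^ 2 = - (s ^ 2 / t ^ 2) := by ring
  rw [e]; linarith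

/-- Homogeneous smoothing estimate: if `|⟨x⟩^β Q(x,k)| ≤ M` and `|φ(k)| ≤ |k|^{1/2}`, then
`⟨x⟩^β ‖∫ Q(x,k) φ(k) e^{ik²s} h(k) dk‖_{L²_s([0,t])} ≤ C M ‖h‖_{L²}`. -/
theorem statement_6 : ∃ C : ℝ, 0 < C ∧
    ∀ (β M : ℝ), 0 < M →
    ∀ Q : ℝ → ℝ → ℂ, Measurable (Function.uncurry Q) →
      (∀ x k : ℝ, jap x ^ β * ‖Q x k‖ ≤ M) →
    ∀ φ : ℝ → ℂ, Measurable φ → (∀ k : ℝ, ‖φ k‖ ≤ Real.sqrt |k|) →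
    ∀ t : ℝ, 0 ≤ t → ∀ h : SchwartzMap ℝ ℂ, ∀ x : ℝ,
      jap x ^ β * Real.sqrt (∫ s in (0:ℝ)..t,
          ‖∫ k : ℝ, Q x k * φ k * Complex.exp (Complex.I * (k : ℂ) ^ 2 * (s : ℂ)) * h k‖ ^ 2) ≤
        C * M * Real.sqrt (∫ k : ℝ, ‖h k‖ ^ 2) := by
  refine ⟨Real.sqrt (Real.exp 1 * (2 * Real.pi)), by positivity, ?_⟩
  intro β M hM Q hQ hQM φ hφ hφk t ht h x
  have hJ : 0 < jap x ^ β := Real.rpow_pos_of_pos (by unfold jap; positivity) _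
  set J := jap x ^ β with hJd
  have hQb : ∀ k, ‖Q x k‖ ≤ M / J := fun k => by
    rw [le_div_iff₀ hJ, mul_comm]; exact hQM x k
  have hA : 0 < M / J := by positivity
  have hgb : ∀ k, ‖Q x k * φ k * h k‖ ≤ Real.sqrt |k| * (M / J * ‖h k‖) := by
    intro k
    rw [norm_mul, norm_mul]
    calc _ ≤ M / J * Real.sqrt |k| * ‖h k‖ := by
          gcongr
          · exact hQb k
          · exact hφk k
      _ = _ := by ring
  have hmeas : Measurable (fun k => Q x k * φ k * h k) :=
    ((hQ.comp measurable_prodMk_left).mul hφ).mul h.continuous.measurable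
  have hg : Integrable (fun k => Q x k * φ k * h k) := by
    have h0 := h.integrable_pow_mul volume 0
    have h1 := h.integrable_pow_mul volume 1
    refine ((h0.add h1).const_mul (M / J)).mono' hmeas.aestronglyMeasurable
      (Eventually.of_forall fun k => (hgb k).trans ?_)
    have hs : Real.sqrt |k| ≤ 1 + |k| := by
      rw [Real.sqrt_le_left (by positivity)]; nlinarith [abs_nonneg k]
    calc _ ≤ (1 + |k|) * (M / J * ‖h k‖) := by gcongr
      _ = _ := by simp; ring
  have hh2 : Integrable (fun k => ‖h k‖ ^ 2) :=
    MemLp.integrable_norm_pow (p := 2) (by exact_mod_cast h.memLp 2 volume) (by norm_num)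
  have key := core_t ht _ hg (fun k => M / J * ‖h k‖)
    (h.continuous.norm.measurable.const_mul _) (fun k => by positivity)
    (by simpa only [mul_pow] using hh2.const_mul _) hgb
  simp only [mul_pow, integral_const_mul] at key
  have e : ∀ s k : ℝ, Q x k * φ k * Complex.exp (Complex.I * (k : ℂ) ^ 2 * (s : ℂ)) * h k
      = Q x k * φ k * h k * Complex.exp (Complex.I * (k : ℂ) ^ 2 * (s : ℂ)) :=
    fun s k => by ring
  simp only [e]
  calc _ ≤ J * Real.sqrt (Real.exp 1 * (2 * Real.pi) * ((M / J) ^ 2 * ∫ k : ℝ, ‖h k‖ ^ 2)) := by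
        gcongr
    _ = _ := by
        rw [Real.sqrt_mul (x := Real.exp 1 * (2 * Real.pi)) (by positivity),
          Real.sqrt_mul (x := (M / J) ^ 2) (by positivity), Real.sqrt_sq hA.le]
        field_simp
end

section
/- Let β ∈ ℝ and M > 0. Let Q : ℝ × [0,∞) → ℂ be such that for each x the map k ↦ Q(x,k) is C¹ and |⟨x⟩^β ∂_k^j Q(x,k)| ≤ M for j = 0,1 and all x ∈ ℝ, k ≥ 0. Let φ : [0,∞) → ℂ be of the form φ(k) = k·ψ(k), where ψ : [0,∞) → ℂ is C¹ with |ψ(k)| + |ψ'(k)| ≤ ⟨k⟩^{−1} for all k ≥ 0. Then there exists C > 0 depending only on M such that for every t ∈ ℝ with |t| ≥ 1, every compactly supported C¹ function h : ℝ → ℂ, and every x ∈ ℝ: ⟨x⟩^β | ∫_0^∞ φ(k) Q(x,k) e^{ik²t} h(k) dk | ≤ C |t|^{−1} ‖h‖_{H¹(ℝ)}. -/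
open MeasureTheory Filter Topology Set

theorem aux_intOn (f : ℝ → ℂ) (R : ℝ) (hf : ContinuousOn f (Ici 0))
    (h0 : ∀ k, R < k → f k = 0) : IntegrableOn f (Ioi 0) := by
  have h1 : IntegrableOn f (Icc 0 R) :=
    (hf.mono Icc_subset_Ici_self).integrableOn_Icc
  have h2 : IntegrableOn f (Ioi R) :=
    (integrableOn_zero (ε' := ℂ) (μ := volume) (s := Ioi R)).congr_fun
      (fun k hk => (h0 k hk).symm) measurableSet_Ioi
  refine (h1.union h2).mono_set ?_
  intro k hk
  rcases le_or_gt k R with h | h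
  · exact Or.inl ⟨le_of_lt hk, h⟩
  · exact Or.inr h

theorem aux_ftc (f f' : ℝ → ℂ) (R : ℝ) (hf : ContinuousOn f (Ici 0))
    (hf' : ContinuousOn f' (Ici 0)) (hd : ∀ k, 0 < k → HasDerivAt f (f' k) k)
    (h0 : ∀ k, R < k → f k = 0) (h0' : ∀ k, R < k → f' k = 0) :
    ∫ k in Ioi (0:ℝ), f' k = - f 0 := by
  have ht : Tendsto f atTop (𝓝 0) := by
    refine tendsto_const_nhds.congr' ?_
    filter_upwards [eventually_gt_atTop R] with k hk
    exact (h0 k hk).symm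
  have := integral_Ioi_of_hasDerivAt_of_tendsto (a := (0:ℝ)) (hf 0 (by simp)) (fun k hk => hd k hk)
    (aux_intOn f' R hf' h0') ht
  simpa using this

theorem aux_ibp (a a' : ℝ → ℂ) (R t : ℝ) (ht : 1 ≤ |t|) (hf : ContinuousOn a (Ici 0))
    (hf' : ContinuousOn a' (Ici 0)) (hd : ∀ k, 0 < k → HasDerivAt a (a' k) k)
    (h0 : ∀ k, R < k → a k = 0) (h0' : ∀ k, R < k → a' k = 0) :
    ‖∫ k in Ioi (0:ℝ), (k:ℂ) * a k * Complex.exp (Complex.I * (k : ℂ) ^ 2 * (t : ℂ))‖ ≤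
      |t|⁻¹ * ∫ k in Ioi (0:ℝ), ‖a' k‖ := by
  set e : ℝ → ℂ := fun k => Complex.exp (Complex.I * (k : ℂ) ^ 2 * (t : ℂ)) with he
  have hec : Continuous e := by rw [he]; fun_prop
  have hen : ∀ k, ‖e k‖ = 1 := by
    intro k
    have : Complex.I * (k : ℂ) ^ 2 * (t : ℂ) = ((k ^ 2 * t : ℝ) : ℂ) * Complex.I := by
      push_cast; ring
    simp only [he]
    rw [this, Complex.norm_exp_ofReal_mul_I]
  have hed : ∀ k : ℝ, HasDerivAt e (2 * Complex.I * t * k * e k) k := by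
    intro k
    have h1 : HasDerivAt (fun k : ℝ => (k : ℂ)) 1 k := Complex.ofRealCLM.hasDerivAt
    have h2 := (((h1.pow 2).const_mul Complex.I).mul_const (t:ℂ)).cexp
    refine h2.congr_deriv ?_
    simp [he]; ring
  have A := aux_ftc a a' R hf hf' hd h0 h0'
  have B := aux_ftc (fun k => e k * a k)
    (fun k => 2 * Complex.I * t * (k * a k * e k) + e k * a' k) R
    (hec.continuousOn.mul hf) (by fun_prop)
    (fun k hk => ((hed k).mul (hd k hk)).congr_deriv (by ring))
    (fun k hk => by simp [h0 k hk]) (fun k hk => by simp [h0 k hk, h0' k hk])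
  rw [integral_add, integral_const_mul] at B
  rotate_left
  · exact aux_intOn _ R (by fun_prop) (fun k hk => by simp [h0 k hk])
  · exact aux_intOn _ R (by fun_prop) (fun k hk => by simp [h0' k hk])
  have e0 : e 0 = 1 := by simp [he]
  simp only [e0, one_mul] at B
  set J := ∫ k in Ioi (0:ℝ), (k:ℂ) * a k * e k
  have hN : ‖∫ k in Ioi (0:ℝ), e k * a' k‖ ≤ ∫ k in Ioi (0:ℝ), ‖a' k‖ := by
    refine (norm_integral_le_integral_norm _).trans (le_of_eq ?_)
    simp [hen]
  have hA : ‖∫ k in Ioi (0:ℝ), a' k‖ ≤ ∫ k in Ioi (0:ℝ), ‖a' k‖ := norm_integral_le_integral_norm _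
  have hJ : 2 * Complex.I * t * J = (∫ k in Ioi (0:ℝ), a' k) - ∫ k in Ioi (0:ℝ), e k * a' k := by
    rw [A, ← B]; ring
  have hJ2 : 2 * |t| * ‖J‖ ≤ 2 * ∫ k in Ioi (0:ℝ), ‖a' k‖ := by
    have : ‖2 * Complex.I * t * J‖ = 2 * |t| * ‖J‖ := by simp
    rw [← this, hJ]
    refine (norm_sub_le _ _).trans ?_
    linarith
  rw [inv_mul_eq_div, le_div_iff₀ (by linarith)]
  linarith

theorem aux_jap_pos (x : ℝ) : 0 < jap x := by unfold jap; positivity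

theorem aux_cs_s9 (u v : ℝ → ℝ) (hu : Continuous u) (hv : Continuous v)
    (hu0 : ∀ k, 0 ≤ u k) (hv0 : ∀ k, 0 ≤ v k)
    (huc : HasCompactSupport u) (hvc : HasCompactSupport v) :
    Integrable (fun k => (jap k)⁻¹ * (u k + v k)) ∧
    ∫ k, (jap k)⁻¹ * (u k + v k) ≤
      Real.sqrt (2 * Real.pi) * Real.sqrt ((∫ k, u k ^ 2) + ∫ k, v k ^ 2) := by
  have hj : Continuous fun k => (jap k)⁻¹ :=
    Continuous.inv₀ (by unfold jap; fun_prop) (fun k => (aux_jap_pos k).ne')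
  have hi : Integrable (fun k => (jap k)⁻¹ * (u k + v k)) :=
    (hj.mul (hu.add hv)).integrable_of_hasCompactSupport ((huc.add hvc).mul_left)
  refine ⟨hi, ?_⟩
  have hjs : ∀ k : ℝ, (jap k)⁻¹ ^ 2 = (1 + k ^ 2)⁻¹ := by
    intro k
    rw [inv_pow, jap, Real.sq_sqrt (by positivity)]
  have m1 : MemLp (fun k => (jap k)⁻¹) 2 volume := by
    rw [memLp_two_iff_integrable_sq hj.aestronglyMeasurable]
    simp only [hjs]
    exact integrable_inv_one_add_sq
  have m2 : MemLp (fun k => u k + v k) 2 volume :=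
    (hu.add hv).memLp_of_hasCompactSupport (huc.add hvc)
  have iu : Integrable (fun k => u k ^ 2) :=
    ((hu.memLp_of_hasCompactSupport huc (p := 2)).integrable_sq)
  have iv : Integrable (fun k => v k ^ 2) :=
    ((hv.memLp_of_hasCompactSupport hvc (p := 2)).integrable_sq)
  have H := integral_mul_le_Lp_mul_Lq_of_nonneg (μ := volume) Real.HolderConjugate.two_two
    (f := fun k => (jap k)⁻¹) (g := fun k => u k + v k)
    (Eventually.of_forall fun k => (inv_pos.2 (aux_jap_pos k)).le)
    (Eventually.of_forall fun k => add_nonneg (hu0 k) (hv0 k))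
    (by simpa using m1) (by simpa using m2)
  simp only [Real.rpow_two, hjs, ← Real.sqrt_eq_rpow, integral_univ_inv_one_add_sq] at H
  refine H.trans ?_
  rw [← Real.sqrt_mul (by positivity), ← Real.sqrt_mul (by positivity)]
  apply Real.sqrt_le_sqrt
  have : ∫ k, (u k + v k) ^ 2 ≤ ∫ k, 2 * (u k ^ 2 + v k ^ 2) := by
    refine integral_mono m2.integrable_sq ((iu.add iv).const_mul 2) ?_
    intro k
    simp only
    nlinarith [sq_nonneg (u k - v k)]
  rw [integral_const_mul, integral_add iu iv] at this
  nlinarith [Real.pi_pos]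

theorem aux_deriv (f : ℝ → ℂ) (hf : ContDiffOn ℝ 1 f (Ici 0)) :
    ContinuousOn (derivWithin f (Ici 0)) (Ici 0) ∧
    ∀ k, 0 < k → HasDerivAt f (derivWithin f (Ici 0) k) k :=
  ⟨hf.continuousOn_derivWithin (uniqueDiffOn_Ici 0) le_rfl, fun k hk =>
    ((hf.differentiableOn one_ne_zero) k hk.le).hasDerivWithinAt.hasDerivAt (Ici_mem_nhds hk)⟩

theorem statement_9 :
    ∀ M : ℝ, 0 < M → ∃ C : ℝ, 0 < C ∧
      ∀ (β : ℝ) (Q : ℝ → ℝ → ℂ) (ψ : ℝ → ℂ),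
        (∀ x : ℝ, ContDiffOn ℝ 1 (fun k => Q x k) (Set.Ici (0:ℝ))) →
        (∀ x k : ℝ, 0 ≤ k → jap x ^ β * ‖Q x k‖ ≤ M) →
        (∀ x k : ℝ, 0 ≤ k →
          jap x ^ β * ‖derivWithin (fun k' => Q x k') (Set.Ici (0:ℝ)) k‖ ≤ M) →
        ContDiffOn ℝ 1 ψ (Set.Ici (0:ℝ)) →
        (∀ k : ℝ, 0 ≤ k → ‖ψ k‖ + ‖derivWithin ψ (Set.Ici (0:ℝ)) k‖ ≤ (jap k)⁻¹) →
        ∀ t : ℝ, 1 ≤ |t| →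
        ∀ h : ℝ → ℂ, ContDiff ℝ 1 h → HasCompactSupport h →
        ∀ x : ℝ,
          jap x ^ β * ‖∫ k in Set.Ioi (0:ℝ), (k : ℂ) * ψ k * Q x k *
              Complex.exp (Complex.I * (k : ℂ) ^ 2 * (t : ℂ)) * h k‖ ≤
            C * |t|⁻¹ * Real.sqrt ((∫ k : ℝ, ‖h k‖ ^ 2) + ∫ k : ℝ, ‖deriv h k‖ ^ 2) := by
  intro M hM
  refine ⟨M * Real.sqrt (2 * Real.pi), by positivity, ?_⟩
  intro β Q ψ hQ hQ0 hQ1 hψ hψb t ht h hh hhc x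
  have hw : 0 ≤ jap x ^ β := Real.rpow_nonneg (aux_jap_pos x).le β
  set w := jap x ^ β with hwdef
  obtain ⟨q1, q2⟩ := aux_deriv _ (hQ x)
  obtain ⟨p1, p2⟩ := aux_deriv _ hψ
  have q0 : ContinuousOn (fun k => Q x k) (Ici 0) := (hQ x).continuousOn
  have p0 : ContinuousOn ψ (Ici 0) := hψ.continuousOn
  have q0b := hQ0 x
  have q1b := hQ1 x
  set q : ℝ → ℂ := fun k => Q x k with hq
  set q' := derivWithin q (Ici 0) with hq'
  set ψ' := derivWithin ψ (Ici 0) with hψ'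
  have hc : Continuous h := hh.continuous
  have hc' : Continuous (deriv h) := hh.continuous_deriv le_rfl
  have hdh : ∀ k, HasDerivAt h (deriv h k) k := fun k =>
    (hh.differentiable one_ne_zero k).hasDerivAt
  obtain ⟨R, hR⟩ := hhc.isCompact.bddAbove
  have z0 : ∀ k, R < k → h k = 0 := fun k hk =>
    image_eq_zero_of_notMem_tsupport fun hm => absurd (hR hm) (not_le.2 hk)
  have z1 : ∀ k, R < k → deriv h k = 0 := fun k hk =>
    image_eq_zero_of_notMem_tsupport fun hm =>
      absurd (hR (tsupport_deriv_subset hm)) (not_le.2 hk)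
  set a' : ℝ → ℂ := fun k => (ψ' k * q k + ψ k * q' k) * h k + ψ k * q k * deriv h k with ha'
  have ca' : ContinuousOn a' (Ici 0) := by rw [ha']; fun_prop
  have za' : ∀ k, R < k → a' k = 0 := fun k hk => by simp [ha', z0 k hk, z1 k hk]
  have I := aux_ibp (fun k => ψ k * q k * h k) a' R t ht (by fun_prop) ca'
    (fun k hk => ((p2 k hk).mul (q2 k hk)).mul (hdh k))
    (fun k hk => by simp [z0 k hk]) za'
  obtain ⟨J1, J2⟩ := aux_cs_s9 (fun k => ‖h k‖) (fun k => ‖deriv h k‖) hc.norm hc'.norm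
    (fun k => norm_nonneg _) (fun k => norm_nonneg _) hhc.norm hhc.deriv.norm
  have eqI : (∫ k in Set.Ioi (0:ℝ), (k : ℂ) * ψ k * Q x k *
              Complex.exp (Complex.I * (k : ℂ) ^ 2 * (t : ℂ)) * h k) =
      ∫ k in Ioi (0:ℝ), (k:ℂ) * (ψ k * q k * h k) *
        Complex.exp (Complex.I * (k : ℂ) ^ 2 * (t : ℂ)) := by
    congr 1; ext k; simp only [hq]; ring
  have K : w * ∫ k in Ioi (0:ℝ), ‖a' k‖ ≤
      M * ∫ k, (jap k)⁻¹ * (‖h k‖ + ‖deriv h k‖) := by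
    rw [← integral_const_mul, ← integral_const_mul]
    refine (setIntegral_mono_on (g := fun k => M * ((jap k)⁻¹ * (‖h k‖ + ‖deriv h k‖)))
      ((aux_intOn a' R ca' za').norm.const_mul w)
      (J1.const_mul M).integrableOn measurableSet_Ioi ?_).trans
      (setIntegral_le_integral (J1.const_mul M) (Eventually.of_forall fun k => ?_))
    · intro k hk
      have hk0 : (0:ℝ) ≤ k := le_of_lt hk
      have b0 := q0b k hk0
      have b1 : w * ‖q' k‖ ≤ M := q1b k hk0
      have b2 : ‖ψ k‖ + ‖ψ' k‖ ≤ (jap k)⁻¹ := hψb k hk0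
      have n1 : ‖a' k‖ ≤ (‖ψ' k‖ * ‖q k‖ + ‖ψ k‖ * ‖q' k‖) * ‖h k‖
          + ‖ψ k‖ * ‖q k‖ * ‖deriv h k‖ := by
        simp only [ha', ← norm_mul]
        refine (norm_add_le _ _).trans ?_
        gcongr
        rw [norm_mul _ (h k)]
        gcongr
        exact norm_add_le _ _
      calc w * ‖a' k‖ ≤ w * ((‖ψ' k‖ * ‖q k‖ + ‖ψ k‖ * ‖q' k‖) * ‖h k‖
          + ‖ψ k‖ * ‖q k‖ * ‖deriv h k‖) := by gcongr
        _ = (‖ψ' k‖ * (w * ‖q k‖) + ‖ψ k‖ * (w * ‖q' k‖)) * ‖h k‖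
          + ‖ψ k‖ * (w * ‖q k‖) * ‖deriv h k‖ := by ring
        _ ≤ (‖ψ' k‖ * M + ‖ψ k‖ * M) * ‖h k‖ + ‖ψ k‖ * M * ‖deriv h k‖ := by gcongr
        _ ≤ M * ((‖ψ k‖ + ‖ψ' k‖) * (‖h k‖ + ‖deriv h k‖)) := by
          have : 0 ≤ M * (‖ψ' k‖ * ‖deriv h k‖) := by positivity
          nlinarith
        _ ≤ M * ((jap k)⁻¹ * (‖h k‖ + ‖deriv h k‖)) := by gcongr
    · have := aux_jap_pos k
      simp only [Pi.zero_apply]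
      positivity
  rw [eqI]
  calc _ ≤ w * (|t|⁻¹ * ∫ k in Ioi (0:ℝ), ‖a' k‖) := by gcongr
    _ = |t|⁻¹ * (w * ∫ k in Ioi (0:ℝ), ‖a' k‖) := by ring
    _ ≤ |t|⁻¹ * (M * (Real.sqrt (2 * Real.pi) *
        Real.sqrt ((∫ k : ℝ, ‖h k‖ ^ 2) + ∫ k : ℝ, ‖deriv h k‖ ^ 2))) := by
      refine mul_le_mul_of_nonneg_left ?_ (by positivity)
      exact K.trans (mul_le_mul_of_nonneg_left J2 hM.le)
    _ = _ := by ring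
end
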